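/- Let n ≥ 1, let v = (1, 2, …, n), let m ≥ 1, and let r = (r_1, …, r_n) ∈ ℕ^n satisfy r·v = n. For k ≥ 1 let C(n, k, r) denote the number of noncrossing set partitions of [n] of type r with exactly k connected components. Then, as rational numbers, C(n, m, r) = Σ_{k=1}^{m} (−1)^{k} · C(m, k) · A_r(−k), where A_r(−k) denotes the evaluation of the polynomial A_r(x) at x = −k and C(m, k) is a binomial coefficient. -/

import Mathlib

/-- A set partition of `[n] = {1, …, n}`, encoded as a `Finpartition` of `Finset.Icc 1 n`. -/
abbrev SetPartitionOn (n : ℕ) := Finpartition (Finset.Icc 1 n)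

/-- `π` has type `r = (r_1, …, r_n)` if for each `i` the number of blocks of size `i` is `r_i`. -/
def HasType {n : ℕ} (π : SetPartitionOn n) (r : Fin n → ℕ) : Prop :=
  ∀ i : Fin n, (π.parts.filter (fun B => B.card = i.1 + 1)).card = r i

/-- `π` is noncrossing: there are no `a < b < c < d` with `a, c` in one block and
`b, d` in a different block. -/
def Noncrossing {n : ℕ} (π : SetPartitionOn n) : Prop :=
  ¬ ∃ a b c d : ℕ, a < b ∧ b < c ∧ c < d ∧
      ∃ B ∈ π.parts, ∃ B' ∈ π.parts, B ≠ B' ∧ a ∈ B ∧ c ∈ B ∧ b ∈ B' ∧ d ∈ B'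

/-- `(i, j)` is an arc of `π`: `i < j` lie in a common block with no element of that
block strictly between them. -/
def IsArc {n : ℕ} (π : SetPartitionOn n) (i j : ℕ) : Prop :=
  i < j ∧ ∃ B ∈ π.parts, i ∈ B ∧ j ∈ B ∧ ∀ k ∈ B, ¬ (i < k ∧ k < j)

/-- `π` is nonnesting: there are no arcs `(a, d)` and `(b, c)` with `a < b < c < d`. -/
def Nonnesting {n : ℕ} (π : SetPartitionOn n) : Prop :=
  ¬ ∃ a b c d : ℕ, a < b ∧ b < c ∧ c < d ∧ IsArc π a d ∧ IsArc π b c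

/-- `i ∈ {1, …, n-1}` is a cut of `π` if no block contains both an element `≤ i` and an
element `> i`. -/
def IsCut {n : ℕ} (π : SetPartitionOn n) (i : ℕ) : Prop :=
  1 ≤ i ∧ i ≤ n - 1 ∧ ∀ B ∈ π.parts, (∀ x ∈ B, x ≤ i) ∨ (∀ x ∈ B, i < x)

/-- `π` is connected if it has no cuts. -/
def Connected {n : ℕ} (π : SetPartitionOn n) : Prop := ∀ i, ¬ IsCut π i

/-- The number of cuts of `π`; `π` has exactly `m` connected components iff this is `m - 1`. -/
noncomputable def cutCount {n : ℕ} (π : SetPartitionOn n) : ℕ := Set.ncard {i : ℕ | IsCut π i}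

open Polynomial

/-- Zeng's polynomial `A_r(x) ∈ ℚ[x]` for `v = (1, 2, …, n)`:
`A_r(x) = 1` if `r = 0`, and otherwise
`A_r(x) = (1/r!) · x · (x + r·v - 1)(x + r·v - 2) ⋯ (x + r·v - |r| + 1)`. -/
noncomputable def Apoly {n : ℕ} (r : Fin n → ℕ) : Polynomial ℚ :=
  if r = 0 then 1 else
    C (((∏ i, (r i).factorial : ℕ) : ℚ))⁻¹ *
      (X * ∏ j ∈ Finset.range ((∑ i, r i) - 1),
        (X + C (((∑ i, (i.1 + 1) * r i : ℕ) : ℚ) - 1 - (j : ℚ))))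

/-!
A noncrossing partition is determined by the word whose `j`-th letter is the size of the block with
minimum `j` (`0` if there is none), because reading `1, …, n` from left to right each element that
is not a minimum must join the most recently opened block still missing elements. The words that
occur are the Łukasiewicz words, and the cuts of the partition are the inner returns of the word to
height `0`.

Removing the first letter gives a recursion for the number of Łukasiewicz words of type `r` that
start at height `h` and visit height `0` exactly `m` times before the end. With `∇` the backward
difference, `∇^m A_r (h)` satisfies the same recursion because
`∇ A_r (x) = ∑ i, A_{r - e_i} (x + v_i - 1)`, so the two agree. At `h = 0` the binomial expansion
of `∇^m` is the alternating sum, whose term `k = 0` vanishes.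
-/

section FiberCard

variable {α β : Type*} [DecidableEq β] {s : Finset α} {f g : α → β} {b : β}

/-- The size of the fibre of `f` over `b` within `s`. -/
def fiberCard (s : Finset α) (f : α → β) (b : β) : ℕ := (s.filter fun x => f x = b).card

theorem fiberCard_congr (h : ∀ x ∈ s, f x = g x) : fiberCard s f = fiberCard s g := by
  funext b
  exact congrArg Finset.card (Finset.filter_congr fun x hx => by rw [h x hx])

theorem fiberCard_pos_iff : 0 < fiberCard s f b ↔ ∃ x ∈ s, f x = b := by
  simp [fiberCard, Finset.card_pos, Finset.filter_nonempty_iff]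

theorem sum_fiberCard_succ {f : α → ℕ} (hf : ∀ x ∈ s, 1 ≤ f x) (i : ℕ) :
    ∑ j ∈ Finset.range i, fiberCard s f (j + 1) = (s.filter fun x => f x ≤ i).card := by
  rw [Finset.card_eq_sum_card_fiberwise (f := fun x => f x - 1) (t := Finset.range i)]
  · refine Finset.sum_congr rfl fun j hj => ?_
    rw [fiberCard, Finset.filter_filter]
    refine congrArg _ (Finset.filter_congr fun x hx => ?_)
    have := hf x hx
    rw [Finset.mem_range] at hj
    omega
  · intro x hx
    obtain ⟨hxs, hxi⟩ := Finset.mem_filter.1 hx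
    have := hf x hxs
    simp only [Finset.coe_range, Set.mem_Iio]
    omega

end FiberCard

section BackwardDifference

variable {R : Type*} [CommRing R]

/-- The `m`-th backward difference `∇^m f`, where `∇ f x = f x - f (x - 1)`; it is Mathlib's forward
difference with a shifted base point. -/
def backwardDiff (m : ℕ) (f : R → R) (x : R) : R := (fwdDiff 1)^[m] f (x - m)

@[simp]
theorem backwardDiff_zero (f : R → R) (x : R) : backwardDiff 0 f x = f x := by
  simp [backwardDiff]

theorem backwardDiff_eq_sum (m : ℕ) (f : R → R) (x : R) :
    backwardDiff m f x = ∑ k ∈ Finset.range (m + 1), (-1) ^ k * (m.choose k : R) * f (x - k) := by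
  rw [backwardDiff, fwdDiff_iter_eq_sum_shift, ← Finset.sum_range_reflect]
  refine Finset.sum_congr rfl fun k hk => ?_
  have hkm : k ≤ m := Finset.mem_range_succ_iff.1 hk
  rw [Nat.add_sub_cancel, Nat.sub_sub_self hkm, Nat.choose_symm hkm, zsmul_eq_mul]
  have hpoint : x - (m : R) + (m - k) • (1 : R) = x - k := by
    rw [nsmul_one, Nat.cast_sub hkm]
    ring
  rw [hpoint]
  push_cast
  rfl

theorem backwardDiff_succ (m : ℕ) (f : R → R) (x : R) :
    backwardDiff (m + 1) f x = backwardDiff m (fun y => f y - f (y - 1)) x := by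
  have hf : fwdDiff 1 f = fun y => f (y + 1) - f (y + 1 - 1) := by
    funext y
    simp [fwdDiff]
  have hpoint : x - (m + 1 : ℕ) + 1 = x - m := by
    push_cast
    ring
  rw [backwardDiff, Function.iterate_succ_apply, hf,
    fwdDiff_iter_comp_add 1 (fun y => f y - f (y - 1)), hpoint, backwardDiff]

theorem backwardDiff_succ' (m : ℕ) (f : R → R) (x : R) :
    backwardDiff (m + 1) f x = backwardDiff m f x - backwardDiff m f (x - 1) := by
  have hpoint : x - (m + 1 : ℕ) = x - 1 - m := by
    push_cast
    ring
  rw [backwardDiff, Function.iterate_succ_apply', fwdDiff, hpoint, backwardDiff, backwardDiff,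
    sub_right_comm, sub_add_cancel]

theorem backwardDiff_sum_comp_add {ι : Type*} (s : Finset ι) (f : ι → R → R) (c : ι → R)
    (m : ℕ) (x : R) :
    backwardDiff m (fun y => ∑ i ∈ s, f i (y + c i)) x =
      ∑ i ∈ s, backwardDiff m (f i) (x + c i) := by
  have hsum : (fun y => ∑ i ∈ s, f i (y + c i)) = ∑ i ∈ s, fun y => f i (y + c i) := by
    funext y
    simp
  simp only [backwardDiff, hsum, fwdDiff_iter_finsetSum, Finset.sum_apply, fwdDiff_iter_comp_add,
    add_sub_right_comm]

theorem backwardDiff_const_one (m : ℕ) (x : R) :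
    backwardDiff m (fun _ => (1 : R)) x = if m = 0 then 1 else 0 := by
  cases m <;> simp [backwardDiff_succ, backwardDiff_eq_sum]

end BackwardDifference

theorem descPochhammer_succ_eval_left {R : Type*} [CommRing R] (l : ℕ) (y : R) :
    (descPochhammer R (l + 1)).eval y = y * (descPochhammer R l).eval (y - 1) := by
  simp [descPochhammer_succ_left, eval_comp]

section Apoly

variable {K : ℕ} {r : Fin K → ℕ} {i : Fin K}

/-- The type `r - e_i`, one block of size `i + 1` being removed; only meaningful when `0 < r i`. -/
def removeBlock (r : Fin K → ℕ) (i : Fin K) : Fin K → ℕ := Function.update r i (r i - 1)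

theorem apply_eq_removeBlock_add (hi : 0 < r i) (j : Fin K) :
    r j = removeBlock r i j + if j = i then 1 else 0 := by
  by_cases hj : j = i
  · subst hj
    simp only [removeBlock, Function.update_self, if_true]
    omega
  · simp [removeBlock, hj]

theorem sum_mul_eq_sum_mul_removeBlock_add (c : Fin K → ℕ) (hi : 0 < r i) :
    ∑ j, c j * r j = ∑ j, c j * removeBlock r i j + c i := by
  simp [apply_eq_removeBlock_add hi, mul_add, Finset.sum_add_distrib]

theorem sum_eq_sum_removeBlock_add_one (hi : 0 < r i) :
    ∑ j, r j = ∑ j, removeBlock r i j + 1 := by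
  simpa using sum_mul_eq_sum_mul_removeBlock_add (fun _ => 1) hi

theorem prod_factorial_eq_mul_removeBlock (hi : 0 < r i) :
    ∏ j, (r j).factorial = r i * ∏ j, (removeBlock r i j).factorial := by
  have hfactor (j : Fin K) :
      (r j).factorial = (if j = i then r i else 1) * (removeBlock r i j).factorial := by
    by_cases hj : j = i
    · subst hj
      simp [removeBlock, Nat.mul_factorial_pred hi.ne']
    · simp [removeBlock, hj]
  rw [Finset.prod_congr rfl fun j _ => hfactor j, Finset.prod_mul_distrib]
  simp

theorem eval_Apoly_zero (x : ℚ) : (Apoly (0 : Fin K → ℕ)).eval x = 1 := by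
  simp [Apoly]

theorem eval_Apoly_of_ne_zero (hr : r ≠ 0) (x : ℚ) :
    (Apoly r).eval x = ((∏ j, (r j).factorial : ℕ) : ℚ)⁻¹ *
      (x * (descPochhammer ℚ (∑ j, r j - 1)).eval
        (x + (∑ j, (j.1 + 1) * r j : ℕ) - 1)) := by
  simp only [Apoly, if_neg hr, eval_mul, eval_C, eval_X, eval_prod, eval_add,
    descPochhammer_eval_eq_prod_range]
  simp only [← add_sub_assoc]

theorem eval_Apoly_at_zero (hr : r ≠ 0) : (Apoly r).eval 0 = 0 := by
  simp [eval_Apoly_of_ne_zero hr]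

theorem eval_Apoly_removeBlock (hi : 0 < r i) (hr : removeBlock r i ≠ 0) (x : ℚ) :
    (Apoly (removeBlock r i)).eval (x + i.1) = ((∏ j, (r j).factorial : ℕ) : ℚ)⁻¹ *
      (r i * (x + i.1) * (descPochhammer ℚ (∑ j, r j - 2)).eval
        (x + (∑ j, (j.1 + 1) * r j : ℕ) - 2)) := by
  have hri : (r i : ℚ) ≠ 0 := by exact_mod_cast hi.ne'
  have hpoint : x + (∑ j, (j.1 + 1) * r j : ℕ) - 2 =
      x + i.1 + (∑ j, (j.1 + 1) * removeBlock r i j : ℕ) - 1 := by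
    rw [sum_mul_eq_sum_mul_removeBlock_add _ hi]
    push_cast
    ring
  have hdegree : ∑ j, r j - 2 = ∑ j, removeBlock r i j - 1 := by
    rw [sum_eq_sum_removeBlock_add_one hi, Nat.add_sub_add_right]
  rw [hpoint, hdegree, eval_Apoly_of_ne_zero hr, prod_factorial_eq_mul_removeBlock hi]
  push_cast
  field_simp

theorem eval_Apoly_sub_eval_Apoly_of_sum_eq_one (hr : ∑ j, r j = 1) (x : ℚ) :
    (Apoly r).eval x - (Apoly r).eval (x - 1) =
      ∑ i with 0 < r i, (Apoly (removeBlock r i)).eval (x + i.1) := by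
  have hr0 : r ≠ 0 := by
    rintro rfl
    simp at hr
  have hterm : ∀ i ∈ Finset.univ.filter (fun i => 0 < r i),
      (Apoly (removeBlock r i)).eval (x + i.1) =
        ((∏ j, (r j).factorial : ℕ) : ℚ)⁻¹ * r i := by
    intro i hi
    have hi : 0 < r i := (Finset.mem_filter.1 hi).2
    have hremove : removeBlock r i = 0 := by
      have hsum := sum_eq_sum_removeBlock_add_one hi
      funext j
      exact Finset.sum_eq_zero_iff.1 (by omega : ∑ j, removeBlock r i j = 0) j (Finset.mem_univ j)
    have hri : (r i : ℚ) ≠ 0 := by exact_mod_cast hi.ne'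
    rw [prod_factorial_eq_mul_removeBlock hi, hremove, eval_Apoly_zero]
    simp [hri]
  have hsupport : ∑ i with 0 < r i, (r i : ℚ) = 1 := by
    rw [Finset.sum_filter_of_ne fun i _ hi => Nat.pos_of_ne_zero (by exact_mod_cast hi)]
    exact_mod_cast hr
  rw [Finset.sum_congr rfl hterm, ← Finset.mul_sum, hsupport, eval_Apoly_of_ne_zero hr0,
    eval_Apoly_of_ne_zero hr0, hr]
  simp only [tsub_self, descPochhammer_zero, eval_one, mul_one]
  ring

/-- As `i` is zero-based, `x + i` is `x + v_i - 1` in the notation `v = (1, 2, …)`. -/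
theorem eval_Apoly_sub_eval_Apoly (r : Fin K → ℕ) (x : ℚ) :
    (Apoly r).eval x - (Apoly r).eval (x - 1) =
      ∑ i with 0 < r i, (Apoly (removeBlock r i)).eval (x + i.1) := by
  rcases eq_or_ne r 0 with rfl | hr
  · simp [eval_Apoly_zero]
  have hpos : ∑ j, r j ≠ 0 := fun h =>
    hr (funext fun j => Finset.sum_eq_zero_iff.1 h j (Finset.mem_univ j))
  obtain hone | ⟨l, hl⟩ : ∑ j, r j = 1 ∨ ∃ l, ∑ j, r j = l + 2 :=
    (show ∑ j, r j = 1 ∨ 2 ≤ ∑ j, r j by omega).imp_right fun h => ⟨_, (Nat.sub_add_cancel h).symm⟩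
  · exact eval_Apoly_sub_eval_Apoly_of_sum_eq_one hone x
  have hterm : ∀ i ∈ Finset.univ.filter (fun i => 0 < r i),
      (Apoly (removeBlock r i)).eval (x + i.1) = ((∏ j, (r j).factorial : ℕ) : ℚ)⁻¹ *
        (descPochhammer ℚ l).eval (x + (∑ j, (j.1 + 1) * r j : ℕ) - 2) * (r i * (x + i.1)) := by
    intro i hi
    have hi : 0 < r i := (Finset.mem_filter.1 hi).2
    have hremove : removeBlock r i ≠ 0 := by
      intro h
      have hsum := sum_eq_sum_removeBlock_add_one hi
      simp [h, hl] at hsum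
    rw [eval_Apoly_removeBlock hi hremove, hl, Nat.add_sub_cancel]
    ring
  have hsupport : ∑ i with 0 < r i, (r i : ℚ) * (x + i.1) =
      (l + 2) * (x - 1) + (∑ j, (j.1 + 1) * r j : ℕ) := by
    rw [Finset.sum_filter_of_ne fun i _ hi =>
      Nat.pos_of_ne_zero (by exact_mod_cast left_ne_zero_of_mul hi)]
    have hcard : ∑ j, (r j : ℚ) = l + 2 := by exact_mod_cast hl
    push_cast
    rw [← hcard, Finset.sum_mul, ← Finset.sum_add_distrib]
    exact Finset.sum_congr rfl fun i _ => by ring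
  rw [Finset.sum_congr rfl hterm, ← Finset.mul_sum, hsupport, eval_Apoly_of_ne_zero hr,
    eval_Apoly_of_ne_zero hr, hl, Nat.add_succ_sub_one, descPochhammer_succ_eval_left,
    descPochhammer_succ_eval]
  ring_nf

theorem backwardDiff_eval_Apoly_succ (r : Fin K → ℕ) (m : ℕ) (x : ℚ) :
    backwardDiff (m + 1) (fun y => (Apoly r).eval y) x =
      ∑ i with 0 < r i, backwardDiff m (fun y => (Apoly (removeBlock r i)).eval y) (x + i.1) := by
  simp only [backwardDiff_succ, eval_Apoly_sub_eval_Apoly]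
  exact backwardDiff_sum_comp_add _ (fun i y => (Apoly (removeBlock r i)).eval y) _ m x

end Apoly

section Words

open scoped Finset

variable {K N h m a : ℕ} {w : ℕ → ℕ} {r : Fin K → ℕ}

/-- The word `a w_0 w_1 ⋯`; words of length `N` are encoded as sequences `ℕ → ℕ` vanishing from
index `N` on. -/
def consWord (a : ℕ) (w : ℕ → ℕ) : ℕ → ℕ
  | 0 => a
  | j + 1 => w j

/-- A Łukasiewicz word of length `N` with initial height `h`: reading the letter `a` changes the
height by `a - 1`, the height never becomes negative, and the final height is `0`. The height after
`i` letters is `h + ∑ j ∈ range i, w j - i`, and the conditions are stated without subtraction. -/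
structure IsLukasiewicz (N h : ℕ) (w : ℕ → ℕ) : Prop where
  eq_zero_of_le : ∀ j, N ≤ j → w j = 0
  le_add_sum : ∀ i ≤ N, i ≤ h + ∑ j ∈ Finset.range i, w j
  add_sum_eq : h + ∑ j ∈ Finset.range N, w j = N

/-- The number of proper prefixes of a word after which the height is `0`. -/
def returnCount (N h : ℕ) (w : ℕ → ℕ) : ℕ :=
  #{i ∈ Finset.range N | h + ∑ j ∈ Finset.range i, w j = i}

/-- All letters are at most `K`, and each positive letter `i + 1` occurs `r i` times. -/
def HasLetterType (N : ℕ) (w : ℕ → ℕ) (r : Fin K → ℕ) : Prop :=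
  (∀ j, w j ≤ K) ∧ ∀ i : Fin K, fiberCard (Finset.range N) w (i.1 + 1) = r i

theorem consWord_eta (w : ℕ → ℕ) : consWord (w 0) (fun j => w (j + 1)) = w := by
  funext j
  cases j <;> rfl

theorem consWord_injective (a : ℕ) : Function.Injective (consWord a) := fun _ _ h =>
  funext fun j => congrFun h (j + 1)

theorem sum_range_succ_consWord (a : ℕ) (w : ℕ → ℕ) (i : ℕ) :
    ∑ j ∈ Finset.range (i + 1), consWord a w j = ∑ j ∈ Finset.range i, w j + a :=
  Finset.sum_range_succ' _ _

theorem isLukasiewicz_consWord_iff :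
    IsLukasiewicz (N + 1) h (consWord a w) ↔ 1 ≤ h + a ∧ IsLukasiewicz N (h + a - 1) w := by
  constructor
  · rintro ⟨hzero, hle, hsum⟩
    have hpos : 1 ≤ h + a := by simpa [consWord] using hle 1 (by omega)
    refine ⟨hpos, fun j hj => hzero (j + 1) (by omega), fun i hi => ?_, ?_⟩
    · have := hle (i + 1) (by omega)
      rw [sum_range_succ_consWord] at this
      omega
    · rw [sum_range_succ_consWord] at hsum
      omega
  · rintro ⟨hpos, hzero, hle, hsum⟩
    refine ⟨?_, ?_, ?_⟩
    · rintro (_ | j) hj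
      · omega
      · exact hzero j (by omega)
    · rintro (_ | i) hi
      · omega
      · have := hle i (by omega)
        rw [sum_range_succ_consWord]
        omega
    · rw [sum_range_succ_consWord]
      omega

theorem returnCount_consWord (ha : 1 ≤ h + a) :
    returnCount (N + 1) h (consWord a w) =
      returnCount N (h + a - 1) w + if h = 0 then 1 else 0 := by
  rw [returnCount, Finset.card_filter, Finset.sum_range_succ', returnCount, Finset.card_filter]
  congr 1
  refine Finset.sum_congr rfl fun i _ => ?_
  rw [sum_range_succ_consWord]
  congr 1
  apply propext
  omega

theorem fiberCard_consWord (N a b : ℕ) (w : ℕ → ℕ) :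
    fiberCard (Finset.range (N + 1)) (consWord a w) b =
      fiberCard (Finset.range N) w b + if a = b then 1 else 0 := by
  rw [fiberCard, Finset.card_filter, Finset.sum_range_succ', fiberCard, Finset.card_filter]
  rfl

theorem forall_consWord_le_iff : (∀ j, consWord a w j ≤ K) ↔ a ≤ K ∧ ∀ j, w j ≤ K :=
  ⟨fun hle => ⟨hle 0, fun j => hle (j + 1)⟩, fun ⟨ha, hw⟩ j => j.casesOn ha hw⟩

theorem hasLetterType_consWord_zero_iff :
    HasLetterType (N + 1) (consWord 0 w) r ↔ HasLetterType N w r := by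
  simp [HasLetterType, forall_consWord_le_iff, fiberCard_consWord]

theorem hasLetterType_consWord_succ_iff (i : Fin K) :
    HasLetterType (N + 1) (consWord (i.1 + 1) w) r ↔
      0 < r i ∧ HasLetterType N w (removeBlock r i) := by
  have hcount (j : Fin K) : fiberCard (Finset.range (N + 1)) (consWord (i.1 + 1) w) (j.1 + 1) =
      fiberCard (Finset.range N) w (j.1 + 1) + if j = i then 1 else 0 := by
    simp [fiberCard_consWord, Fin.ext_iff, eq_comm]
  have hiK : i.1 + 1 ≤ K := i.2
  simp only [HasLetterType, forall_consWord_le_iff, hiK, true_and, hcount]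
  constructor
  · rintro ⟨hle, hr⟩
    have hi : 0 < r i := by
      have := hr i
      simp only [if_true] at this
      omega
    exact ⟨hi, hle, fun j => Nat.add_right_cancel ((hr j).trans (apply_eq_removeBlock_add hi j))⟩
  · rintro ⟨hi, hle, hr⟩
    exact ⟨hle, fun j => by rw [hr j, ← apply_eq_removeBlock_add hi j]⟩

/-- Łukasiewicz words of length `N` and type `r` that start at height `h` and are at height `0`
exactly `m` times before their end. -/
def lukasiewiczWords (N h m : ℕ) (r : Fin K → ℕ) : Set (ℕ → ℕ) :=
  {w | IsLukasiewicz N h w ∧ returnCount N h w = m ∧ HasLetterType N w r}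

theorem finite_lukasiewiczWords : (lukasiewiczWords N h m r).Finite := by
  refine (Finset.finite_toSet (Finset.piAntidiag (Finset.range N) (N - h))).subset ?_
  rintro w ⟨⟨hzero, -, hsum⟩, -, -⟩
  simp only [Finset.mem_coe, Finset.mem_piAntidiag, Finset.mem_range]
  exact ⟨Nat.eq_sub_of_add_eq' hsum, fun j hj => not_le.1 fun hjN => hj (hzero j hjN)⟩

theorem consWord_zero_mem_lukasiewiczWords_iff :
    consWord 0 w ∈ lukasiewiczWords (N + 1) (h + 1) m r ↔ w ∈ lukasiewiczWords N h m r := by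
  simp +contextual [lukasiewiczWords, isLukasiewicz_consWord_iff, returnCount_consWord,
    hasLetterType_consWord_zero_iff]

theorem consWord_succ_mem_lukasiewiczWords_iff (i : Fin K) :
    consWord (i.1 + 1) w ∈ lukasiewiczWords (N + 1) h (m + if h = 0 then 1 else 0) r ↔
      0 < r i ∧ w ∈ lukasiewiczWords N (h + i.1) m (removeBlock r i) := by
  have hpos : 1 ≤ h + (i.1 + 1) := Nat.le_add_left 1 (h + i.1)
  simp only [lukasiewiczWords, Set.mem_ofPred_eq, isLukasiewicz_consWord_iff, hpos, true_and,
    returnCount_consWord hpos, hasLetterType_consWord_succ_iff, Nat.add_right_cancel_iff]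
  rw [← add_assoc, Nat.add_sub_cancel]
  tauto

theorem ncard_lukasiewiczWords_pos_head :
    (lukasiewiczWords (N + 1) h (m + if h = 0 then 1 else 0) r ∩ {w | 0 < w 0}).ncard =
      ∑ i with 0 < r i, (lukasiewiczWords N (h + i.1) m (removeBlock r i)).ncard := by
  have hunion : lukasiewiczWords (N + 1) h (m + if h = 0 then 1 else 0) r ∩ {w | 0 < w 0} =
      ⋃ i ∈ (Finset.univ.filter (fun i => 0 < r i) : Set (Fin K)),
        consWord (i.1 + 1) '' lukasiewiczWords N (h + i.1) m (removeBlock r i) := by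
    ext w
    simp only [Set.mem_iUnion, Set.mem_image, Finset.mem_coe, Finset.mem_filter,
      Finset.mem_univ, true_and]
    constructor
    · rintro ⟨hw, hpos : 0 < w 0⟩
      have hK : w 0 ≤ K := hw.2.2.1 0
      have hhead : consWord (w 0 - 1 + 1) (fun j => w (j + 1)) = w := by
        rw [Nat.sub_add_cancel hpos, consWord_eta]
      rw [← hhead] at hw
      obtain ⟨hi, hmem⟩ := (consWord_succ_mem_lukasiewiczWords_iff ⟨w 0 - 1, by omega⟩).1 hw
      exact ⟨_, hi, _, hmem, hhead⟩
    · rintro ⟨i, hi, w, hw, rfl⟩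
      exact ⟨(consWord_succ_mem_lukasiewiczWords_iff i).2 ⟨hi, hw⟩, Nat.succ_pos _⟩
  rw [hunion, Set.Finite.ncard_biUnion (Finset.finite_toSet _), finsum_mem_coe_finset]
  · simp only [Set.ncard_image_of_injective _ (consWord_injective _)]
  · exact fun i _ => finite_lukasiewiczWords.image _
  · intro i _ j _ hij
    rw [Function.onFun, Set.disjoint_left]
    rintro _ ⟨w, -, rfl⟩ ⟨w', -, hw'⟩
    exact hij (Fin.ext (Nat.succ_injective (congrFun hw' 0).symm))

theorem ncard_lukasiewiczWords_zero_succ :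
    (lukasiewiczWords (N + 1) 0 (m + 1) r).ncard =
      ∑ i with 0 < r i, (lukasiewiczWords N i.1 m (removeBlock r i)).ncard := by
  have hhead : lukasiewiczWords (N + 1) 0 (m + 1) r ⊆ {w | 0 < w 0} := fun w hw =>
    show 1 ≤ w 0 by simpa using hw.1.le_add_sum 1 (by omega)
  rw [← Set.inter_eq_left.2 hhead]
  simpa using ncard_lukasiewiczWords_pos_head (N := N) (h := 0) (m := m) (r := r)

theorem ncard_lukasiewiczWords_succ :
    (lukasiewiczWords (N + 1) (h + 1) m r).ncard = (lukasiewiczWords N h m r).ncard +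
      ∑ i with 0 < r i, (lukasiewiczWords N (h + 1 + i.1) m (removeBlock r i)).ncard := by
  have hzero : lukasiewiczWords (N + 1) (h + 1) m r \ {w | 0 < w 0} =
      consWord 0 '' lukasiewiczWords N h m r := by
    ext w
    constructor
    · rintro ⟨hw, hhead⟩
      have heta := consWord_eta w
      rw [Nat.eq_zero_of_not_pos hhead] at heta
      rw [← heta, consWord_zero_mem_lukasiewiczWords_iff] at hw
      exact ⟨_, hw, heta⟩
    · rintro ⟨w, hw, rfl⟩
      exact ⟨consWord_zero_mem_lukasiewiczWords_iff.2 hw, lt_irrefl 0⟩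
  have hpos := ncard_lukasiewiczWords_pos_head (N := N) (h := h + 1) (m := m) (r := r)
  simp only [Nat.add_one_ne_zero, if_false, add_zero] at hpos
  rw [← Set.ncard_inter_add_ncard_sdiff_eq_ncard _ {w | 0 < w 0} finite_lukasiewiczWords, hpos,
    hzero, Set.ncard_image_of_injective _ (consWord_injective 0), add_comm]

theorem lukasiewiczWords_zero_zero : lukasiewiczWords (N + 1) 0 0 r = ∅ := by
  refine Set.eq_empty_of_forall_notMem fun w hw => ?_
  have : (0 : ℕ) ∈ {i ∈ Finset.range (N + 1) | 0 + ∑ j ∈ Finset.range i, w j = i} := by simp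
  exact (Finset.card_ne_zero_of_mem this) hw.2.1

theorem lukasiewiczWords_length_zero :
    lukasiewiczWords 0 0 m (0 : Fin K → ℕ) = if m = 0 then {0} else ∅ := by
  split_ifs with hm
  · ext w
    simp only [lukasiewiczWords, Set.mem_ofPred_eq, Set.mem_singleton_iff]
    refine ⟨fun hw => funext fun j => hw.1.eq_zero_of_le j (Nat.zero_le j), ?_⟩
    rintro rfl
    exact ⟨⟨by simp, by simp, by simp⟩, by simp [returnCount, hm],
      by simp [HasLetterType, fiberCard]⟩
  · exact Set.eq_empty_of_forall_notMem fun w hw => hm (by simpa [returnCount] using hw.2.1.symm)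

theorem cast_ncard_lukasiewiczWords (hN : h + ∑ i, (i.1 + 1) * r i = N) :
    ((lukasiewiczWords N h m r).ncard : ℚ) =
      backwardDiff m (fun x => (Apoly r).eval x) h := by
  have hremove {r : Fin K → ℕ} {i : Fin K} (hi : 0 < r i) :=
    sum_mul_eq_sum_mul_removeBlock_add (fun j => j.1 + 1) hi
  induction N generalizing h m r with
  | zero =>
    obtain ⟨rfl, hsum⟩ : h = 0 ∧ ∑ i, (i.1 + 1) * r i = 0 := Nat.add_eq_zero_iff.1 hN
    obtain rfl : r = 0 := funext fun i => by simpa using Finset.sum_eq_zero_iff.1 hsum i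
    simp only [lukasiewiczWords_length_zero, eval_Apoly_zero, backwardDiff_const_one]
    split_ifs <;> simp
  | succ N ih =>
    rcases h with _ | h
    · have hr : r ≠ 0 := by
        rintro rfl
        simp at hN
      rcases m with _ | m
      · simp [lukasiewiczWords_zero_zero, eval_Apoly_at_zero hr]
      · rw [ncard_lukasiewiczWords_zero_succ, backwardDiff_eval_Apoly_succ]
        push_cast
        refine Finset.sum_congr rfl fun i hi => ?_
        have hi : 0 < r i := (Finset.mem_filter.1 hi).2
        rw [ih (by have := hremove hi; omega), zero_add]
    · have hstep := backwardDiff_succ' m (fun x => (Apoly r).eval x) (h + 1)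
      rw [backwardDiff_eval_Apoly_succ, add_sub_cancel_right, eq_sub_iff_add_eq'] at hstep
      rw [ncard_lukasiewiczWords_succ]
      push_cast
      rw [← hstep, ih (by omega)]
      congr 1
      refine Finset.sum_congr rfl fun i hi => ?_
      have hi : 0 < r i := (Finset.mem_filter.1 hi).2
      rw [ih (by have := hremove hi; omega)]
      push_cast
      rfl

end Words

section LabelWord

variable {n i x b : ℕ} {p : ℕ → ℕ}

theorem fiberCard_Ico_add_fiberCard_Icc (hx : x ∈ Finset.Icc 1 n) (p : ℕ → ℕ) (b : ℕ) :
    fiberCard (Finset.Ico 1 x) p b + fiberCard (Finset.Icc x n) p b =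
      fiberCard (Finset.Icc 1 n) p b := by
  rw [Finset.mem_Icc] at hx
  simp only [fiberCard, Finset.card_filter, ← Finset.Ico_add_one_right_eq_Icc]
  exact Finset.sum_Ico_consecutive _ hx.1 (by omega)

theorem fiberCard_Ico_lt_fiberCard_Icc_iff (hx : x ∈ Finset.Icc 1 n) :
    fiberCard (Finset.Ico 1 x) p b < fiberCard (Finset.Icc 1 n) p b ↔
      ∃ y ∈ Finset.Icc x n, p y = b := by
  rw [← fiberCard_Ico_add_fiberCard_Icc hx, lt_add_iff_pos_right, fiberCard_pos_iff]

theorem fiberCard_Icc_succ (n : ℕ) (p : ℕ → ℕ) (b : ℕ) :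
    fiberCard (Finset.Icc 1 (n + 1)) p b =
      fiberCard (Finset.Ico 1 (n + 1)) p b + if p (n + 1) = b then 1 else 0 := by
  rw [← fiberCard_Ico_add_fiberCard_Icc (Finset.mem_Icc.2 ⟨by omega, le_rfl⟩)]
  simp only [Finset.Icc_self, fiberCard, Finset.filter_singleton]
  split_ifs <;> simp

theorem Icc_subset_filter_le (hp : ∀ x ∈ Finset.Icc 1 n, p x ∈ Finset.Icc 1 x) (hi : i ≤ n) :
    Finset.Icc 1 i ⊆ {x ∈ Finset.Icc 1 n | p x ≤ i} := by
  intro x hx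
  rw [Finset.mem_Icc] at hx
  have hxn : x ∈ Finset.Icc 1 n := Finset.mem_Icc.2 ⟨hx.1, hx.2.trans hi⟩
  exact Finset.mem_filter.2 ⟨hxn, (Finset.mem_Icc.1 (hp x hxn)).2.trans hx.2⟩

theorem le_sum_fiberCard (hp : ∀ x ∈ Finset.Icc 1 n, p x ∈ Finset.Icc 1 x) (hi : i ≤ n) :
    i ≤ ∑ j ∈ Finset.range i, fiberCard (Finset.Icc 1 n) p (j + 1) := by
  rw [sum_fiberCard_succ fun x hx => (Finset.mem_Icc.1 (hp x hx)).1]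
  simpa using Finset.card_le_card (Icc_subset_filter_le hp hi)

theorem sum_fiberCard_eq_iff (hp : ∀ x ∈ Finset.Icc 1 n, p x ∈ Finset.Icc 1 x) (hi : i ≤ n) :
    ∑ j ∈ Finset.range i, fiberCard (Finset.Icc 1 n) p (j + 1) = i ↔
      ∀ x ∈ Finset.Icc 1 n, i < x → i < p x := by
  have hsub := Icc_subset_filter_le hp hi
  have hcard : ∑ j ∈ Finset.range i, fiberCard (Finset.Icc 1 n) p (j + 1) = i ↔
      {x ∈ Finset.Icc 1 n | p x ≤ i} ⊆ Finset.Icc 1 i := by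
    rw [sum_fiberCard_succ fun x hx => (Finset.mem_Icc.1 (hp x hx)).1]
    refine ⟨fun h => (Finset.eq_of_subset_of_card_le hsub (by simp [h])).ge, fun h => ?_⟩
    simp [h.antisymm hsub]
  rw [hcard]
  refine ⟨fun h x hx hix => ?_, fun h x hx => ?_⟩
  · by_contra! hpx
    exact hix.not_ge (Finset.mem_Icc.1 (h (Finset.mem_filter.2 ⟨hx, hpx⟩))).2
  · obtain ⟨hxn, hpx⟩ := Finset.mem_filter.1 hx
    refine Finset.mem_Icc.2 ⟨(Finset.mem_Icc.1 hxn).1, ?_⟩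
    by_contra! hix
    exact (h x hxn hix).not_ge hpx

/-- The word of length `n` whose letter in position `j` is the number of `x ∈ {1, …, n}` with label
`p x = j + 1`. -/
def labelWord (n : ℕ) (p : ℕ → ℕ) (j : ℕ) : ℕ := fiberCard (Finset.Icc 1 n) p (j + 1)

theorem isLukasiewicz_labelWord (hp : ∀ x ∈ Finset.Icc 1 n, p x ∈ Finset.Icc 1 x) :
    IsLukasiewicz n 0 (labelWord n p) where
  eq_zero_of_le j hj := by
    refine Nat.eq_zero_of_not_pos fun hpos => ?_
    obtain ⟨x, hx, hxj⟩ := fiberCard_pos_iff.1 hpos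
    have := Finset.mem_Icc.1 (hp x hx)
    have := Finset.mem_Icc.1 hx
    omega
  le_add_sum i hi := by
    rw [zero_add]
    exact le_sum_fiberCard hp hi
  add_sum_eq := by
    rw [zero_add]
    refine (sum_fiberCard_eq_iff hp le_rfl).2 fun x hx hnx => ?_
    exact absurd (Finset.mem_Icc.1 hx).2 hnx.not_ge

end LabelWord

section Greedy

variable {n x b : ℕ} {w p q : ℕ → ℕ}

/-- Label `1, …, n` successively, always using the largest label `b ≤ x` that has not yet been used
`w (b - 1)` times. For noncrossing partitions labelled by block minima this says that `x` joins the
most recently opened block that is not complete yet. -/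
def IsGreedy (n : ℕ) (w p : ℕ → ℕ) : Prop :=
  ∀ x ∈ Finset.Icc 1 n,
    IsGreatest {b | b ∈ Finset.Icc 1 x ∧ fiberCard (Finset.Ico 1 x) p b < w (b - 1)} (p x)

theorem IsGreedy.mem_Icc (hp : IsGreedy n w p) (hx : x ∈ Finset.Icc 1 n) :
    p x ∈ Finset.Icc 1 x := (hp x hx).1.1

theorem fiberCard_Ico_congr (h : ∀ y ∈ Finset.Icc 1 n, y < x → p y = q y) (hx : x ≤ n + 1) :
    fiberCard (Finset.Ico 1 x) p = fiberCard (Finset.Ico 1 x) q := by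
  refine fiberCard_congr fun y hy => ?_
  rw [Finset.mem_Ico] at hy
  exact h y (Finset.mem_Icc.2 ⟨hy.1, by omega⟩) hy.2

theorem IsGreedy.congr (hp : IsGreedy n w p) (h : ∀ x ∈ Finset.Icc 1 n, p x = q x) :
    IsGreedy n w q := by
  intro x hx
  have hxn := (Finset.mem_Icc.1 hx).2
  rw [← h x hx, ← fiberCard_Ico_congr (fun y hy _ => h y hy) (by omega)]
  exact hp x hx

theorem IsGreedy.eq_of_isGreedy (hp : IsGreedy n w p) (hq : IsGreedy n w q) :
    ∀ x ∈ Finset.Icc 1 n, p x = q x := by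
  intro x
  induction x using Nat.strong_induction_on with
  | _ x ih =>
    intro hx
    have hxn := (Finset.mem_Icc.1 hx).2
    have hpx := hp x hx
    rw [fiberCard_Ico_congr (fun y hy hyx => ih y hyx hy) (by omega)] at hpx
    exact hpx.unique (hq x hx)

theorem IsGreedy.apply_apply (hp : IsGreedy n w p) (hx : x ∈ Finset.Icc 1 n) :
    p (p x) = p x := by
  obtain ⟨⟨hpx, hcount⟩, -⟩ := hp x hx
  rw [Finset.mem_Icc] at hx hpx
  have hpxn : p x ∈ Finset.Icc 1 n := Finset.mem_Icc.2 ⟨hpx.1, hpx.2.trans hx.2⟩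
  have hunused : fiberCard (Finset.Ico 1 (p x)) p (p x) = 0 := by
    refine Nat.eq_zero_of_not_pos fun hpos => ?_
    obtain ⟨y, hy, hyx⟩ := fiberCard_pos_iff.1 hpos
    rw [Finset.mem_Ico] at hy
    have := Finset.mem_Icc.1 (hp.mem_Icc (Finset.mem_Icc.2 ⟨hy.1, by omega⟩))
    omega
  refine le_antisymm (Finset.mem_Icc.1 (hp.mem_Icc hpxn)).2 ((hp _ hpxn).2 ⟨?_, ?_⟩)
  · exact Finset.mem_Icc.2 ⟨hpx.1, le_rfl⟩
  · omega

theorem IsGreedy.fiberCard_le (hp : IsGreedy n w p) (b : ℕ) :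
    fiberCard (Finset.Icc 1 n) p b ≤ w (b - 1) := by
  induction n with
  | zero => simp [fiberCard]
  | succ n ih =>
    rw [fiberCard_Icc_succ]
    split_ifs with hb
    · rw [← hb]
      exact (hp (n + 1) (by simp)).1.2
    · exact ih fun x hx => hp x (Finset.Icc_subset_Icc_right n.le_succ hx)

theorem IsGreedy.labelWord_eq (hp : IsGreedy n w p) (hw : IsLukasiewicz n 0 w) :
    labelWord n p = w := by
  have hlabel := isLukasiewicz_labelWord fun x hx => hp.mem_Icc hx
  have htotal : ∑ j ∈ Finset.range n, labelWord n p j = ∑ j ∈ Finset.range n, w j :=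
    Nat.add_left_cancel (hlabel.add_sum_eq.trans hw.add_sum_eq.symm)
  funext j
  rcases lt_or_ge j n with hj | hj
  · exact (Finset.sum_eq_sum_iff_of_le fun j _ => hp.fiberCard_le (j + 1)).1 htotal j
      (Finset.mem_range.2 hj)
  · rw [hlabel.eq_zero_of_le j hj, hw.eq_zero_of_le j hj]

theorem exists_fiberCard_lt (hp : IsGreedy n w p)
    (hc : n + 1 ≤ ∑ j ∈ Finset.range (n + 1), w j) :
    ∃ b ∈ Finset.Icc 1 (n + 1), fiberCard (Finset.Ico 1 (n + 1)) p b < w (b - 1) := by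
  by_contra! hfull
  have htotal : ∑ j ∈ Finset.range (n + 1), w j ≤ n :=
    calc ∑ j ∈ Finset.range (n + 1), w j
      _ ≤ ∑ j ∈ Finset.range (n + 1), fiberCard (Finset.Ico 1 (n + 1)) p (j + 1) :=
        Finset.sum_le_sum fun j hj => hfull (j + 1) (by simpa using hj)
      _ ≤ (Finset.Ico 1 (n + 1)).card := by
        have hpos : ∀ x ∈ Finset.Ico 1 (n + 1), 1 ≤ p x := fun x hx =>
          (Finset.mem_Icc.1 (hp.mem_Icc hx)).1
        rw [sum_fiberCard_succ hpos]
        exact Finset.card_filter_le _ _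
      _ = n := by simp
  omega

theorem exists_isGreedy (hc : ∀ i ≤ n, i ≤ ∑ j ∈ Finset.range i, w j) :
    ∃ p, IsGreedy n w p := by
  induction n with
  | zero => exact ⟨id, by simp [IsGreedy]⟩
  | succ n ih =>
    obtain ⟨p, hp⟩ := ih fun i hi => hc i (by omega)
    obtain ⟨v, hv⟩ : ∃ v, IsGreatest
        {b | b ∈ Finset.Icc 1 (n + 1) ∧ fiberCard (Finset.Ico 1 (n + 1)) p b < w (b - 1)} v := by
      refine BddAbove.exists_isGreatest_of_nonempty ⟨n + 1, fun b hb => (Finset.mem_Icc.1 hb.1).2⟩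
        (exists_fiberCard_lt hp (hc _ le_rfl))
    have hagree : ∀ y ∈ Finset.Icc 1 n, p y = Function.update p (n + 1) v y := fun y hy => by
      rw [Function.update_of_ne (by have := Finset.mem_Icc.1 hy; omega)]
    refine ⟨Function.update p (n + 1) v, fun x hx => ?_⟩
    rcases eq_or_ne x (n + 1) with rfl | hxn
    · rwa [Function.update_self, ← fiberCard_Ico_congr (fun y hy _ => hagree y hy) le_rfl]
    · refine hp.congr hagree x (Finset.mem_Icc.2 ?_)
      have := Finset.mem_Icc.1 hx
      omega

theorem isGreedy_labelWord_iff :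
    IsGreedy n (labelWord n p) p ↔ ∀ x ∈ Finset.Icc 1 n,
      IsGreatest {b | b ∈ Finset.Icc 1 x ∧ ∃ y ∈ Finset.Icc x n, p y = b} (p x) := by
  refine forall₂_congr fun x hx => ?_
  have hset : {b | b ∈ Finset.Icc 1 x ∧ fiberCard (Finset.Ico 1 x) p b < labelWord n p (b - 1)} =
      {b | b ∈ Finset.Icc 1 x ∧ ∃ y ∈ Finset.Icc x n, p y = b} :=
    Set.ext fun b => and_congr_right fun hb => by
      rw [labelWord, Nat.sub_add_cancel (Finset.mem_Icc.1 hb).1,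
        fiberCard_Ico_lt_fiberCard_Icc_iff hx]
  rw [hset]

end Greedy

section BlockMin

variable {s : Finset ℕ} {π σ : Finpartition s} {x y : ℕ}

/-- The least element of the block of `x`; the junk value `0` if `x ∉ s`. -/
noncomputable def blockMin (π : Finpartition s) (x : ℕ) : ℕ := sInf {y | y ∈ π.part x}

theorem blockMin_mem_part (π : Finpartition s) (hx : x ∈ s) : blockMin π x ∈ π.part x :=
  Nat.sInf_mem (s := {y | y ∈ π.part x}) ⟨x, π.mem_part hx⟩

theorem blockMin_mem (π : Finpartition s) (hx : x ∈ s) : blockMin π x ∈ s :=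
  π.part_subset x (blockMin_mem_part π hx)

theorem blockMin_le_of_mem_part (hy : y ∈ π.part x) : blockMin π x ≤ y := Nat.sInf_le hy

theorem blockMin_le (π : Finpartition s) (hx : x ∈ s) : blockMin π x ≤ x :=
  blockMin_le_of_mem_part (π.mem_part hx)

theorem part_blockMin (π : Finpartition s) (hx : x ∈ s) : π.part (blockMin π x) = π.part x :=
  π.part_eq_of_mem (π.part_mem.2 hx) (blockMin_mem_part π hx)

theorem blockMin_eq_blockMin_iff (hx : x ∈ s) (hy : y ∈ s) :
    blockMin π x = blockMin π y ↔ π.part x = π.part y :=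
  ⟨fun h => by rw [← part_blockMin π hx, h, part_blockMin π hy],
    fun h => by rw [blockMin, h, blockMin]⟩

theorem blockMin_blockMin (π : Finpartition s) (hx : x ∈ s) :
    blockMin π (blockMin π x) = blockMin π x :=
  (blockMin_eq_blockMin_iff (blockMin_mem π hx) hx).2 (part_blockMin π hx)

theorem part_eq_filter_blockMin (π : Finpartition s) (hx : x ∈ s) :
    π.part x = {y ∈ s | blockMin π y = blockMin π x} := by
  ext y
  rw [Finset.mem_filter]
  refine ⟨fun hy => ?_, fun ⟨hy, h⟩ => ?_⟩
  · have hys := π.part_subset x hy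
    exact ⟨hys, (blockMin_eq_blockMin_iff hys hx).2 (π.part_eq_of_mem (π.part_mem.2 hx) hy)⟩
  · rw [← (blockMin_eq_blockMin_iff hy hx).1 h]
    exact π.mem_part hy

theorem parts_eq_image_part (π : Finpartition s) : π.parts = s.image π.part := by
  ext B
  rw [Finset.mem_image]
  constructor
  · intro hB
    obtain ⟨x, hx⟩ := π.nonempty_of_mem_parts hB
    exact ⟨x, π.le hB hx, π.part_eq_of_mem hB hx⟩
  · rintro ⟨x, hx, rfl⟩
    exact π.part_mem.2 hx

theorem eq_of_blockMin_eq (h : ∀ x ∈ s, blockMin π x = blockMin σ x) : π = σ := by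
  refine Finpartition.ext ?_
  rw [parts_eq_image_part, parts_eq_image_part]
  refine Finset.image_congr fun x hx => ?_
  rw [part_eq_filter_blockMin π hx, part_eq_filter_blockMin σ hx]
  exact Finset.filter_congr fun y hy => by rw [h x hx, h y hy]

theorem exists_blockMin_eq {p : ℕ → ℕ} (hmem : ∀ x ∈ s, p x ∈ s) (hle : ∀ x ∈ s, p x ≤ x)
    (hidem : ∀ x ∈ s, p (p x) = p x) : ∃ π : Finpartition s, ∀ x ∈ s, blockMin π x = p x := by
  classical
  let π := Finpartition.ofSetSetoid (Setoid.ker p) s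
  have mem_part_iff {x y : ℕ} : y ∈ π.part x ↔ x ∈ s ∧ y ∈ s ∧ p x = p y :=
    Finpartition.mem_part_ofSetSetoid_iff_rel _
  refine ⟨π, fun x hx => le_antisymm ?_ ?_⟩
  · exact blockMin_le_of_mem_part (mem_part_iff.2 ⟨hx, hmem x hx, (hidem x hx).symm⟩)
  · obtain ⟨-, hmin, heq⟩ := mem_part_iff.1 (blockMin_mem_part π hx)
    rw [heq]
    exact hle _ hmin

end BlockMin

section BlockSizeWord

open scoped Finset

variable {n x : ℕ} {π : SetPartitionOn n}

/-- The word whose letter in position `j` is the size of the block with minimum `j + 1`, and `0` if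
there is no such block. -/
noncomputable def blockSizeWord (π : SetPartitionOn n) : ℕ → ℕ := labelWord n (blockMin π)

theorem blockMin_mem_Icc (π : SetPartitionOn n) (hx : x ∈ Finset.Icc 1 n) :
    blockMin π x ∈ Finset.Icc 1 x :=
  Finset.mem_Icc.2 ⟨(Finset.mem_Icc.1 (blockMin_mem π hx)).1, blockMin_le π hx⟩

theorem isCut_iff_blockMin {i : ℕ} :
    IsCut π i ↔ 1 ≤ i ∧ i ≤ n - 1 ∧ ∀ x ∈ Finset.Icc 1 n, i < x → i < blockMin π x := by
  refine and_congr_right fun _ => and_congr_right fun _ => ?_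
  rw [parts_eq_image_part, Finset.forall_mem_image]
  constructor
  · intro h x hx hix
    rcases h hx with hle | hlt
    · exact absurd (hle x (π.mem_part hx)) hix.not_ge
    · exact hlt _ (blockMin_mem_part π hx)
  · intro h x hx
    by_contra! hc
    obtain ⟨⟨y, hy, hiy⟩, z, hz, hzi⟩ := hc
    rw [← π.part_eq_of_mem (π.part_mem.2 hx) hy] at hz
    have hmin := h y (π.part_subset x hy) hiy
    exact (hmin.trans_le (blockMin_le_of_mem_part hz)).not_ge hzi

theorem returnCount_blockSizeWord (hn : 1 ≤ n) (π : SetPartitionOn n) :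
    returnCount n 0 (blockSizeWord π) = cutCount π + 1 := by
  have hreturns : {i ∈ Finset.range n | 0 + ∑ j ∈ Finset.range i, blockSizeWord π j = i} =
      insert 0 {i ∈ Finset.Icc 1 (n - 1) | ∀ x ∈ Finset.Icc 1 n, i < x → i < blockMin π x} := by
    ext i
    simp only [Finset.mem_insert, Finset.mem_filter, Finset.mem_range, Finset.mem_Icc, zero_add]
    rcases Nat.eq_zero_or_pos i with rfl | hi
    · simp [Nat.lt_of_succ_le hn]
    · simp only [hi.ne', false_or]
      have hrange : i < n ↔ 1 ≤ i ∧ i ≤ n - 1 := by omega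
      rw [hrange]
      refine and_congr_right fun hin => ?_
      simp only [← Finset.mem_Icc]
      exact sum_fiberCard_eq_iff (fun x => blockMin_mem_Icc π) (by omega)
  have hcuts : {i | IsCut π i} =
      ({i ∈ Finset.Icc 1 (n - 1) | ∀ x ∈ Finset.Icc 1 n, i < x → i < blockMin π x} : Finset ℕ) := by
    ext i
    simp [isCut_iff_blockMin, and_assoc]
  rw [returnCount, hreturns, Finset.card_insert_of_notMem (by simp), cutCount, hcuts,
    Set.ncard_coe_finset]

theorem blockSizeWord_blockMin_sub_one (π : SetPartitionOn n) (hx : x ∈ Finset.Icc 1 n) :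
    blockSizeWord π (blockMin π x - 1) = #(π.part x) := by
  have hmin := (Finset.mem_Icc.1 (blockMin_mem_Icc π hx)).1
  rw [blockSizeWord, labelWord, Nat.sub_add_cancel hmin, part_eq_filter_blockMin π hx, fiberCard]

theorem fiberCard_blockSizeWord {k : ℕ} (hk : 1 ≤ k) (π : SetPartitionOn n) :
    fiberCard (Finset.range n) (blockSizeWord π) k = #{B ∈ π.parts | #B = k} := by
  have hmin : ∀ j ∈ {j ∈ Finset.range n | blockSizeWord π j = k},
      j + 1 ∈ Finset.Icc 1 n ∧ blockMin π (j + 1) = j + 1 := by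
    intro j hj
    obtain ⟨-, hjk⟩ := Finset.mem_filter.1 hj
    have hpos : 0 < fiberCard (Finset.Icc 1 n) (blockMin π) (j + 1) := hk.trans_eq hjk.symm
    obtain ⟨x, hx, hxj⟩ := fiberCard_pos_iff.1 hpos
    exact ⟨hxj ▸ blockMin_mem π hx, hxj ▸ blockMin_blockMin π hx⟩
  refine Finset.card_bij (fun j _ => π.part (j + 1)) (fun j hj => ?_) (fun j hj j' hj' h => ?_)
    fun B hB => ?_
  · obtain ⟨hjn, hmin_j⟩ := hmin j hj
    have hsize := blockSizeWord_blockMin_sub_one π hjn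
    rw [hmin_j, Nat.add_sub_cancel, (Finset.mem_filter.1 hj).2] at hsize
    exact Finset.mem_filter.2 ⟨π.part_mem.2 hjn, hsize.symm⟩
  · obtain ⟨hjn, hmin_j⟩ := hmin j hj
    obtain ⟨hjn', hmin_j'⟩ := hmin j' hj'
    have := (blockMin_eq_blockMin_iff hjn hjn').2 h
    omega
  · obtain ⟨hB, hcard⟩ := Finset.mem_filter.1 hB
    obtain ⟨x, hx, rfl⟩ := Finset.mem_image.1 (parts_eq_image_part π ▸ hB)
    have hbounds := Finset.mem_Icc.1 (blockMin_mem π hx)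
    refine ⟨blockMin π x - 1, Finset.mem_filter.2 ⟨Finset.mem_range.2 (by omega), ?_⟩, ?_⟩
    · rw [blockSizeWord_blockMin_sub_one π hx, hcard]
    · rw [Nat.sub_add_cancel hbounds.1, part_blockMin π hx]

theorem hasLetterType_blockSizeWord_iff {r : Fin n → ℕ} :
    HasLetterType n (blockSizeWord π) r ↔ HasType π r := by
  have hle (j : ℕ) : blockSizeWord π j ≤ n :=
    (Finset.card_filter_le (Finset.Icc 1 n) _).trans_eq (Nat.card_Icc 1 n)
  simp only [HasLetterType, HasType, hle, implies_true, true_and,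
    fiberCard_blockSizeWord (Nat.le_add_left 1 _)]

theorem blockMin_eq_of_mem {B : Finset ℕ} {y : ℕ} (hB : B ∈ π.parts) (hx : x ∈ B) (hy : y ∈ B) :
    blockMin π x = blockMin π y := by
  rw [blockMin, π.part_eq_of_mem hB hx, ← π.part_eq_of_mem hB hy, blockMin]

theorem noncrossing_iff_isGreedy :
    Noncrossing π ↔ IsGreedy n (blockSizeWord π) (blockMin π) := by
  rw [blockSizeWord, isGreedy_labelWord_iff]
  constructor
  · intro hπ x hx
    have hxn := (Finset.mem_Icc.1 hx).2
    refine ⟨⟨blockMin_mem_Icc π hx, x, Finset.mem_Icc.2 ⟨le_rfl, hxn⟩, rfl⟩, ?_⟩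
    rintro _ ⟨hmin, y, hy, rfl⟩
    by_contra! hlt
    rw [Finset.mem_Icc] at hmin hy
    have hyn : y ∈ Finset.Icc 1 n := Finset.mem_Icc.2 ⟨by omega, hy.2⟩
    have hminx : blockMin π y ≠ x := fun h => hlt.ne (by rw [← h, blockMin_blockMin π hyn])
    have hxy : x ≠ y := fun h => hlt.ne (by rw [h])
    exact hπ ⟨blockMin π x, blockMin π y, x, y, hlt, lt_of_le_of_ne hmin.2 hminx,
      lt_of_le_of_ne hy.1 hxy, π.part x, π.part_mem.2 hx, π.part y, π.part_mem.2 hyn,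
      fun h => hlt.ne ((blockMin_eq_blockMin_iff hx hyn).2 h), blockMin_mem_part π hx,
      π.mem_part hx, blockMin_mem_part π hyn, π.mem_part hyn⟩
  · rintro hgreedy ⟨a, b, c, d, hab, hbc, hcd, B, hB, B', hB', hne, ha, hc, hb, hd⟩
    have hac := blockMin_eq_of_mem hB ha hc
    have hbd := blockMin_eq_of_mem hB' hb hd
    have han := π.le hB ha
    have hbn := π.le hB' hb
    have hmin_a := Finset.mem_Icc.1 (blockMin_mem_Icc π han)
    have hmin_b := Finset.mem_Icc.1 (blockMin_mem_Icc π hbn)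
    have hcn := Finset.mem_Icc.1 (π.le hB hc)
    have hdn := Finset.mem_Icc.1 (π.le hB' hd)
    have hle : blockMin π a ≤ blockMin π b := (hgreedy b hbn).2
      ⟨Finset.mem_Icc.2 (by omega), c, Finset.mem_Icc.2 (by omega), hac.symm⟩
    have hge : blockMin π b ≤ blockMin π c := (hgreedy c (π.le hB hc)).2
      ⟨Finset.mem_Icc.2 (by omega), d, Finset.mem_Icc.2 (by omega), hbd.symm⟩
    have hpart := (blockMin_eq_blockMin_iff han hbn).1 (hle.antisymm (hge.trans_eq hac.symm))
    rw [π.part_eq_of_mem hB ha, π.part_eq_of_mem hB' hb] at hpart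
    exact hne hpart

theorem bijOn_blockSizeWord (n : ℕ) :
    Set.BijOn (blockSizeWord (n := n)) {π | Noncrossing π} {w | IsLukasiewicz n 0 w} := by
  refine ⟨fun π _ => isLukasiewicz_labelWord fun x => blockMin_mem_Icc π, ?_, ?_⟩
  · intro π hπ σ hσ h
    have hgreedy := noncrossing_iff_isGreedy.1 hπ
    rw [h] at hgreedy
    exact eq_of_blockMin_eq (hgreedy.eq_of_isGreedy (noncrossing_iff_isGreedy.1 hσ))
  · intro w hw
    obtain ⟨p, hp⟩ := exists_isGreedy fun i hi => by simpa using hw.le_add_sum i hi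
    have hbounds : ∀ x ∈ Finset.Icc 1 n, 1 ≤ p x ∧ p x ≤ x := fun x hx =>
      Finset.mem_Icc.1 (hp.mem_Icc hx)
    obtain ⟨π, hπ⟩ := exists_blockMin_eq (s := Finset.Icc 1 n)
      (fun x hx => Finset.mem_Icc.2
        ⟨(hbounds x hx).1, (hbounds x hx).2.trans (Finset.mem_Icc.1 hx).2⟩)
      (fun x hx => (hbounds x hx).2) fun x => hp.apply_apply
    have hgreedy : IsGreedy n w (blockMin π) := hp.congr fun x hx => (hπ x hx).symm
    have hword : blockSizeWord π = w := hgreedy.labelWord_eq hw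
    exact ⟨π, noncrossing_iff_isGreedy.2 (hword.symm ▸ hgreedy), hword⟩

theorem blockSizeWord_mem_lukasiewiczWords_iff (hn : 1 ≤ n) {m : ℕ} (hm : 1 ≤ m) {r : Fin n → ℕ} :
    blockSizeWord π ∈ lukasiewiczWords n 0 m r ↔ HasType π r ∧ cutCount π = m - 1 := by
  have hluk : IsLukasiewicz n 0 (blockSizeWord π) :=
    isLukasiewicz_labelWord fun x => blockMin_mem_Icc π
  have hcuts : cutCount π + 1 = m ↔ cutCount π = m - 1 := by omega
  rw [lukasiewiczWords, Set.mem_ofPred_eq, returnCount_blockSizeWord hn,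
    hasLetterType_blockSizeWord_iff, hcuts]
  tauto

theorem card_noncrossing_eq_ncard_lukasiewiczWords (hn : 1 ≤ n) {m : ℕ} (hm : 1 ≤ m)
    (r : Fin n → ℕ) :
    Nat.card {π : SetPartitionOn n // Noncrossing π ∧ HasType π r ∧ cutCount π = m - 1} =
      (lukasiewiczWords n 0 m r).ncard := by
  have hsubset : lukasiewiczWords n 0 m r ⊆ {w | IsLukasiewicz n 0 w} := fun w hw => hw.1
  rw [← ((bijOn_blockSizeWord n).subset_right hsubset).ncard_eq]
  simp only [← blockSizeWord_mem_lukasiewiczWords_iff hn hm]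
  rfl

end BlockSizeWord

/-- The number of noncrossing partitions of `[n]` of type `r` with exactly `m` connected
components equals `Σ_{k=1}^{m} (−1)^k C(m,k) A_r(−k)`. -/
theorem card_noncrossing_components_eq_alternating_sum (n : ℕ) (hn : 1 ≤ n) (m : ℕ)
    (hm : 1 ≤ m) (r : Fin n → ℕ) (hrv : ∑ i, (i.1 + 1) * r i = n) :
    (Nat.card {π : SetPartitionOn n //
        Noncrossing π ∧ HasType π r ∧ cutCount π = m - 1} : ℚ) =
      ∑ k ∈ Finset.Icc 1 m, (-1 : ℚ) ^ k * (m.choose k : ℚ) * (Apoly r).eval (-(k : ℚ)) := by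
  have hr : r ≠ 0 := by
    rintro rfl
    simp only [Pi.zero_apply, mul_zero, Finset.sum_const_zero] at hrv
    omega
  calc (Nat.card {π : SetPartitionOn n // Noncrossing π ∧ HasType π r ∧ cutCount π = m - 1} : ℚ)
    _ = (lukasiewiczWords n 0 m r).ncard := by rw [card_noncrossing_eq_ncard_lukasiewiczWords hn hm]
    _ = backwardDiff m (fun x => (Apoly r).eval x) 0 := by
      simpa using cast_ncard_lukasiewiczWords (m := m) ((zero_add _).trans hrv)
    _ = ∑ k ∈ Finset.range (m + 1), (-1) ^ k * (m.choose k : ℚ) * (Apoly r).eval (-(k : ℚ)) := by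
      simp only [backwardDiff_eq_sum, zero_sub]
    _ = ∑ k ∈ Finset.Icc 1 m, (-1) ^ k * (m.choose k : ℚ) * (Apoly r).eval (-(k : ℚ)) := by
      rw [Finset.range_eq_Ico, Finset.sum_eq_sum_Ico_succ_bot (Nat.succ_pos m)]
      simp [eval_Apoly_at_zero hr, Finset.Ico_add_one_right_eq_Icc]
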